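/- Let w lie in the conjugacy class C_α of W̃ and suppose w is conjugate under W to w_α(b). Then Tr(Dτ^j w, V^{⊗n}) = 0 unless α satisfies condition (2.6.1) for j; and if α satisfies (2.6.1), then Tr(Dτ^j w, V^{⊗n}) = h^{l(α[j])}·ζ^{−(Δ(α)+b)jd}·p_{α[j]}(𝒳_j), where h = h_j. -/

import Mathlib

/-!
Common framework for formalizing T. Shoji, "Green functions associated to
complex reflection groups, II" (arXiv:math/0105053).

We model:
* `e`-partitions of `n` as functions `ZMod e → Multiset ℕ`;
* the complex reflection group `W̃ = G(e,1,n)` as the semidirect product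
  `(Fin n → Multiplicative (ZMod e)) ⋊ Equiv.Perm (Fin n)`, and
  `W = G(e,p,n)` as the kernel of the mod-`p` sum character;
* the tensor space `V^{⊗n}` concretely via matrices indexed by
  `Fin n → (Σ k : ZMod e, Fin (m k))`;
* symmetric functions in the (finitely many, `m k ≥ n`) variables
  `x_i^{(k)}` in evaluated form, i.e. as functions of an assignment
  `xv : (Σ k : ZMod e, Fin (m k)) → ℂ`.
-/

open scoped BigOperators

attribute [local instance] Classical.propDecidable

namespace GreenII

/-! ## Combinatorics of e-partitions -/

/-- An `e`-partition of `n`: a tuple of partitions (multisets of positive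
integers) indexed by `ZMod e`, with total size `n`. -/
def IsEPartition (e : ℕ) [NeZero e] (n : ℕ) (α : ZMod e → Multiset ℕ) : Prop :=
  (∀ k, ∀ x ∈ α k, 0 < x) ∧ (∑ k : ZMod e, (α k).sum) = n

/-- The shift operator `θ = θ_p`, `θ(α)^{(k)} = α^{(k-d)}`. -/
def theta (e : ℕ) [NeZero e] (d : ℕ) (α : ZMod e → Multiset ℕ) : ZMod e → Multiset ℕ :=
  fun k => α (k - (d : ZMod e))

/-- `c_{α,p}`: the size of the `θ`-orbit of `α`. -/
noncomputable def csize (e : ℕ) [NeZero e] (d : ℕ) (α : ZMod e → Multiset ℕ) : ℕ :=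
  Function.minimalPeriod (theta e d) α

/-- `Δ(α) = ∑_k k · l(α^{(k)})`. -/
def Delta (e : ℕ) [NeZero e] (α : ZMod e → Multiset ℕ) : ℕ :=
  ∑ k : ZMod e, k.val * (α k).card

/-- `l(α) = ∑_k l(α^{(k)})`, the total number of parts. -/
def lenE (e : ℕ) [NeZero e] (α : ZMod e → Multiset ℕ) : ℕ :=
  ∑ k : ZMod e, (α k).card

/-- `α` and `β` lie in the same `θ`-orbit. -/
def SameOrbit (e : ℕ) [NeZero e] (d : ℕ) (α β : ZMod e → Multiset ℕ) : Prop :=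
  ∃ i, (theta e d)^[i] α = β

/-! ## The groups `W̃ = G(e,1,n)` and `W = G(e,p,n)` -/

/-- The "diagonal" part of `G(e,1,n)`. -/
abbrev NC (e n : ℕ) := Fin n → Multiplicative (ZMod e)

/-- The permutation action of `𝔖_n` on the diagonal part. -/
def permAut (e n : ℕ) (x : Equiv.Perm (Fin n)) : NC e n ≃* NC e n where
  toFun f := f ∘ ⇑x.symm
  invFun f := f ∘ ⇑x
  left_inv f := by funext i; simp
  right_inv f := by funext i; simp
  map_mul' f g := rfl

def permHom (e n : ℕ) : Equiv.Perm (Fin n) →* MulAut (NC e n) where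
  toFun x := permAut e n x
  map_one' := rfl
  map_mul' x y := rfl

/-- `W̃ = G(e,1,n) ≅ (ℤ/eℤ)^n ⋊ 𝔖_n`, with `w = x(a_1,…,a_n)` recorded as
`⟨(a_i), x⟩`. -/
abbrev Wt (e n : ℕ) := NC e n ⋊[permHom e n] Equiv.Perm (Fin n)

noncomputable instance WtFintype (e n : ℕ) [NeZero e] : Fintype (Wt e n) :=
  Fintype.ofEquiv (NC e n × Equiv.Perm (Fin n))
    { toFun := fun x => ⟨x.1, x.2⟩
      invFun := fun x => (x.left, x.right)
      left_inv := fun _ => rfl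
      right_inv := fun _ => rfl }

/-- The character `w ↦ ∑ a_i mod p` of `W̃`. -/
noncomputable def wsumHom (e p n : ℕ) (hp : p ∣ e) : Wt e n →* Multiplicative (ZMod p) where
  toFun w := Multiplicative.ofAdd (∑ i, ZMod.castHom hp (ZMod p) (w.left i).toAdd)
  map_one' := by simp
  map_mul' w w' := by
    have h : ∀ i, ((w * w').left i).toAdd
        = (w.left i).toAdd + (w'.left (w.right.symm i)).toAdd := fun _ => rfl
    simp only [h, map_add, Finset.sum_add_distrib, ofAdd_add]
    congr 2
    exact Equiv.sum_comp w.right.symm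
      (fun i => ZMod.castHom hp (ZMod p) ((w'.left i).toAdd))

/-- `W = G(e,p,n)`: the subgroup of `W̃` on which `∑ a_i ≡ 0 (mod p)`. -/
noncomputable def Wgrp (e p n : ℕ) (hp : p ∣ e) : Subgroup (Wt e n) :=
  (wsumHom e p n hp).ker

/-- `σ = t_1 ∈ W̃`. -/
def sigmaElt (e n : ℕ) [NeZero n] : Wt e n :=
  SemidirectProduct.inl (fun i => Multiplicative.ofAdd (if i = (0 : Fin n) then (1 : ZMod e) else 0))

/-- membership in the coset `σ^q W`. -/
def inCoset (e p n : ℕ) [NeZero n] (hp : p ∣ e) (q : ℕ) (w : Wt e n) : Prop :=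
  ∃ u ∈ Wgrp e p n hp, w = (sigmaElt e n) ^ q * u

/-- conjugacy under `W`. -/
def IsConjW (e p n : ℕ) (hp : p ∣ e) (w w' : Wt e n) : Prop :=
  ∃ u ∈ Wgrp e p n hp, u * w * u⁻¹ = w'

/-- The `e`-partition recording the conjugacy class of `w ∈ W̃`:
a `k`-cycle of length `l` (a cycle of the underlying permutation whose
accumulated `ZMod e`-color is `k`, fixed points counting as `1`-cycles)
contributes a part `l` to the `k`-th component. -/
noncomputable def classOf (e n : ℕ) [NeZero e] (w : Wt e n) : ZMod e → Multiset ℕ := fun k =>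
  ((w.right.cycleFactorsFinset.val.filter
      (fun c => (∑ i ∈ c.support, (w.left i).toAdd) = k)).map fun c => c.support.card)
    + Multiset.replicate
        ((Finset.univ.filter fun i : Fin n => w.right i = i ∧ (w.left i).toAdd = k).card) 1

/-! ### The standard class representative `w_α(b)` -/

/-- The list of (part, color) pairs of an `e`-partition. -/
noncomputable def partsList (e : ℕ) [NeZero e] (α : ZMod e → Multiset ℕ) : List (ℕ × ZMod e) :=
  (Finset.univ : Finset (ZMod e)).toList.flatMap fun k => (α k).toList.map fun r => (r, k)

/-- the color datum of `w_α(b)`: each cycle carries its color at its first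
point, except the first (exceptional) cycle, which carries `k - b` at its
first point and `b` at its last point. -/
noncomputable def aexc (e : ℕ) [NeZero e] (L : List (ℕ × ZMod e)) (b : ZMod e) :
    (Σ i : Fin L.length, Fin (L.get i).1) → ZMod e := fun x =>
  if (x.1 : ℕ) = 0 then
    (if (x.2 : ℕ) = 0 then (L.get x.1).2 - b else 0)
      + (if (x.2 : ℕ) = (L.get x.1).1 - 1 then b else 0)
  else if (x.2 : ℕ) = 0 then (L.get x.1).2 else 0

/-- The standard representative `w_α(b) ∈ W̃` of the paper, 2.6: a product of
disjoint cycles matching `α`, of the form `t_{i_1}^k z` except for one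
exceptional cycle `t_{i_1}^{k-b} t_{i_m}^{b} z`. -/
noncomputable def wrep (e n : ℕ) [NeZero e] (α : ZMod e → Multiset ℕ) (b : ZMod e) : Wt e n :=
  if hcard : Fintype.card (Σ i : Fin (partsList e α).length, Fin ((partsList e α).get i).1) = n then
    let φ := Fintype.equivFinOfCardEq hcard
    ⟨fun t => Multiplicative.ofAdd (aexc e (partsList e α) b (φ.symm t)),
      φ.symm.trans ((Equiv.sigmaCongrRight fun _ => finRotate _).trans φ)⟩
  else 1

/-! ## The tensor space `V^{⊗n}` -/

/-- Basis index of `V = ⊕_k V_k`, `dim V_k = m k`. -/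
abbrev BIdx (e : ℕ) [NeZero e] (m : ZMod e → ℕ) := Σ k : ZMod e, Fin (m k)

/-- Basis index of `V^{⊗n}`. -/
abbrev TIdx (e n : ℕ) [NeZero e] (m : ZMod e → ℕ) := Fin n → BIdx e m

/-- `ζ` raised to a `ZMod e` exponent. -/
noncomputable def zmpow (e : ℕ) [NeZero e] (ζ : ℂ) (c : ZMod e) : ℂ := ζ ^ c.val

/-- the matrix of `w ∈ W̃` on `V^{⊗n}` (𝔖_n permutes the factors, and
`t_k` multiplies by `ζ^j` if the `k`-th factor lies in `V_j`). -/
noncomputable def rhoMat (e n : ℕ) [NeZero e] (ζ : ℂ) (m : ZMod e → ℕ) (w : Wt e n) :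
    Matrix (TIdx e n m) (TIdx e n m) ℂ := fun b' b =>
  if b' = b ∘ ⇑w.right.symm then ∏ s, ζ ^ (((w.left s).toAdd.val) * (b' s).1.val) else 0

/-- The operator `D` (multiplication by `x_{i_1} ⋯ x_{i_n}`), with the
variables evaluated via `xv`. -/
noncomputable def Dmat (e n : ℕ) [NeZero e] (m : ZMod e → ℕ) (xv : BIdx e m → ℂ) :
    Matrix (TIdx e n m) (TIdx e n m) ℂ :=
  Matrix.diagonal fun b => ∏ s, xv (b s)

/-- `τ` on the basis of `V`: `v_j^{(k)} ↦ v_j^{(k+d)}` (uses `m (k+d) = m k`). -/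
def tauB (e : ℕ) [NeZero e] (d : ℕ) (m : ZMod e → ℕ) (hm : ∀ k, m (k + (d : ZMod e)) = m k) :
    BIdx e m → BIdx e m := fun b => ⟨b.1 + (d : ZMod e), Fin.cast (hm b.1).symm b.2⟩

/-- `g ↦ g^{⊗ n}`: the matrix of `g ∈ End V` acting diagonally on `V^{⊗n}`. -/
noncomputable def tensorPow (e n : ℕ) [NeZero e] (m : ZMod e → ℕ)
    (g : Matrix (BIdx e m) (BIdx e m) ℂ) : Matrix (TIdx e n m) (TIdx e n m) ℂ :=
  Matrix.of fun b' b => ∏ s, g (b' s) (b s)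

/-- the matrix of `τ` on `V`. -/
noncomputable def tauV (e : ℕ) [NeZero e] (d : ℕ) (m : ZMod e → ℕ)
    (hm : ∀ k, m (k + (d : ZMod e)) = m k) : Matrix (BIdx e m) (BIdx e m) ℂ :=
  fun b' b => if b' = tauB e d m hm b then 1 else 0

/-- the matrix of `τ` on `V^{⊗n}`. -/
noncomputable def tauMat (e n : ℕ) [NeZero e] (d : ℕ) (m : ZMod e → ℕ)
    (hm : ∀ k, m (k + (d : ZMod e)) = m k) : Matrix (TIdx e n m) (TIdx e n m) ℂ :=
  tensorPow e n m (tauV e d m hm)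

/-- a member of `G = GL_{m_0} × ⋯ × GL_{m_{e-1}}` (as an endomorphism of V,
invertibility stated separately). -/
def IsBlockDiag (e : ℕ) [NeZero e] (m : ZMod e → ℕ) (g : Matrix (BIdx e m) (BIdx e m) ℂ) : Prop :=
  ∀ b b' : BIdx e m, b.1 ≠ b'.1 → g b b' = 0

/-- a block upper unitriangular matrix (product of root subgroups for the
positive roots of `G`). -/
def IsUpperUni (e : ℕ) [NeZero e] (m : ZMod e → ℕ) (g : Matrix (BIdx e m) (BIdx e m) ℂ) : Prop :=
  (∀ b, g b b = 1) ∧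
    ∀ b b' : BIdx e m, b ≠ b' → ¬(b.1 = b'.1 ∧ b.2.val < b'.2.val) → g b b' = 0

/-! ## Symmetric functions (evaluated form) -/

/-- value of the variable `x_i^{(k)}` under the assignment `xv` (junk `0` out
of range). -/
noncomputable def xval (e : ℕ) [NeZero e] (m : ZMod e → ℕ) (xv : BIdx e m → ℂ)
    (k : ZMod e) (i : ℕ) : ℂ :=
  if h : i < m k then xv ⟨k, ⟨i, h⟩⟩ else 0

/-- `h_j`: the order of the image of `j` in `ℤ/pℤ`. -/
noncomputable def hOrd (p j : ℕ) : ℕ := addOrderOf ((j : ZMod p))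

/-- `j₁ d` where `j₁ = p / h_j`: the number of components of the variable
system `𝒳_j`. -/
noncomputable def Esys (p d j : ℕ) : ℕ := (p / hOrd p j) * d

/-- the variable `X_i^{(k)} = x_i^{(k)} x_i^{(k+jd)} ⋯ x_i^{(k+(h_j-1)jd)}`
of the system `𝒳_j`. -/
noncomputable def Xvar (e : ℕ) [NeZero e] (p d : ℕ) (m : ZMod e → ℕ) (xv : BIdx e m → ℂ)
    (j k i : ℕ) : ℂ :=
  ∏ s ∈ Finset.range (hOrd p j), xval e m xv (((k + s * j * d : ℕ) : ZMod e)) i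

/-- number of variables in the `k`-th component of any of the systems `𝒳_j`. -/
noncomputable def mmX (e : ℕ) [NeZero e] (m : ZMod e → ℕ) : ℕ → ℕ := fun k => m ((k : ℕ) : ZMod e)

/-- The variables of the system `𝒳_j`, as a doubly indexed family. -/
noncomputable def vvX (e : ℕ) [NeZero e] (p d : ℕ) (m : ZMod e → ℕ) (xv : BIdx e m → ℂ)
    (j : ℕ) : ℕ → ℕ → ℂ := fun k i => Xvar e p d m xv j k i

/-- complete homogeneous symmetric polynomial `h_r` in `N` variables. -/
noncomputable def hcomp (N r : ℕ) (v : ℕ → ℂ) : ℂ :=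
  ∑ c ∈ Finset.Nat.antidiagonalTuple N r, ∏ i : Fin N, v i ^ c i

/-- the parts of a partition in decreasing order (`0` beyond the length). -/
noncomputable def lamOf (μ : Multiset ℕ) (i : ℕ) : ℕ := ((μ.sort (· ≤ ·)).reverse).getD i 0

/-- Schur polynomial in `N` variables (Jacobi–Trudi). -/
noncomputable def schurFin (N : ℕ) (μ : Multiset ℕ) (v : ℕ → ℂ) : ℂ :=
  Matrix.det (Matrix.of fun i j : Fin N =>
    if h : (0 : ℤ) ≤ (lamOf μ i + j : ℤ) - i then hcomp N ((lamOf μ i + j : ℤ) - i).toNat v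
    else 0)

/-- monomial symmetric polynomial in `N` variables. -/
noncomputable def monoFin (N : ℕ) (μ : Multiset ℕ) (v : ℕ → ℂ) : ℂ :=
  ∑ c ∈ (Finset.Nat.antidiagonalTuple N μ.sum).filter
      (fun c => ((List.ofFn c : List ℕ) : Multiset ℕ).filter (fun x => 0 < x) = μ),
    ∏ i : Fin N, v i ^ c i

/-! ### generic families for a variable system with `E` components -/

/-- `p_r^{(i)} = ∑_{k<E} u^{ik} p_r(x^{(k)})` (formula (2.2.2)/(2.4.2), with
`u` a primitive `E`-th root of unity), for the system of variables
`vv k i` (`k < E`, `i < mm k`); `p_0^{(i)} = 1`. -/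
noncomputable def pGenSys (u : ℂ) (E : ℕ) (mm : ℕ → ℕ) (vv : ℕ → ℕ → ℂ) (i r : ℕ) : ℂ :=
  if r = 0 then 1 else ∑ k ∈ Finset.range E, u ^ (i * k) * ∑ s ∈ Finset.range (mm k), vv k s ^ r

/-- the power sum `p_γ` of an `E`-tuple of partitions (2.2.1). -/
noncomputable def pAlphaSys (u : ℂ) (E : ℕ) (mm : ℕ → ℕ) (vv : ℕ → ℕ → ℂ)
    (γ : ℕ → Multiset ℕ) : ℂ :=
  ∏ k ∈ Finset.range E, ((γ k).map fun r => pGenSys u E mm vv k r).prod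

/-- the Schur function `s_γ` of an `E`-tuple of partitions. -/
noncomputable def sAlphaSys (E : ℕ) (mm : ℕ → ℕ) (vv : ℕ → ℕ → ℂ) (γ : ℕ → Multiset ℕ) : ℂ :=
  ∏ k ∈ Finset.range E, schurFin (mm k) (γ k) (vv k)

/-- the monomial symmetric function `m_γ` of an `E`-tuple of partitions. -/
noncomputable def mAlphaSys (E : ℕ) (mm : ℕ → ℕ) (vv : ℕ → ℕ → ℂ) (γ : ℕ → Multiset ℕ) : ℂ :=
  ∏ k ∈ Finset.range E, monoFin (mm k) (γ k) (vv k)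

/-- the function `q_{r,±}^{(k)}(x;t)` of [S], (3.1.1). -/
noncomputable def qGenSys (t : ℂ) (E : ℕ) (mm : ℕ → ℕ) (vv : ℕ → ℕ → ℂ)
    (sgn : Bool) (k r : ℕ) : ℂ :=
  if r = 0 then 1 else
    let k' := if sgn then (k + 1) % E else (k + E - 1) % E
    ∑ i ∈ Finset.range (mm k),
      vv k i ^ ((r : ℤ) + (mm k : ℤ) - 1 - (mm k' : ℤ)) *
        (∏ jj ∈ Finset.range (mm k'), (vv k i - t * vv k' jj)) /
        ∏ jj ∈ (Finset.range (mm k)).erase i, (vv k i - vv k jj)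

/-- the function `q_{γ,±}(x;t)` of [S], (3.1.2). -/
noncomputable def qAlphaSys (t : ℂ) (E : ℕ) (mm : ℕ → ℕ) (vv : ℕ → ℕ → ℂ)
    (sgn : Bool) (γ : ℕ → Multiset ℕ) : ℂ :=
  ∏ k ∈ Finset.range E, ((γ k).map fun r => qGenSys t E mm vv sgn k r).prod

/-- `z_β = ∏ i^{n_i} n_i!` for a partition `β = (1^{n_1} 2^{n_2} ⋯)`. -/
noncomputable def zPart (μ : Multiset ℕ) : ℂ :=
  ∏ i ∈ μ.toFinset, (i : ℂ) ^ (μ.count i) * (Nat.factorial (μ.count i) : ℂ)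

/-- `z_γ(t) = z_γ ∏_{k,j} (1 - u^k t^{γ_j^{(k)}})⁻¹` for an `E`-tuple of
partitions `γ` (`u` the `E`-th root of unity), cf. (3.1.3). -/
noncomputable def zClassSys (u t : ℂ) (E : ℕ) (γ : ℕ → Multiset ℕ) : ℂ :=
  ((E : ℂ) ^ (∑ k ∈ Finset.range E, (γ k).card)) * (∏ k ∈ Finset.range E, zPart (γ k)) *
    (∏ k ∈ Finset.range E, ((γ k).map fun r => (1 - u ^ k * t ^ r)).prod)⁻¹

/-! ### the `j`-th pieces attached to an e-partition -/

/-- the truncation `α{j} = (α^{(0)},…,α^{(j₁d-1)})` (used when `c_{α,p} ∣ j`). -/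
noncomputable def braceF (e : ℕ) [NeZero e] (p d : ℕ) (j : ℕ) (α : ZMod e → Multiset ℕ) :
    ℕ → Multiset ℕ :=
  fun k => if k < Esys p d j then α ((k : ℕ) : ZMod e) else 0

/-- the `j₁d`-partition `α[j]` of `n/h` (condition (2.6.1)): component `k/h`
has parts `α_i^{(k)}/h`. -/
noncomputable def bracketF (e : ℕ) [NeZero e] (p d : ℕ) (j : ℕ) (α : ZMod e → Multiset ℕ) :
    ℕ → Multiset ℕ :=
  fun k' => if k' < Esys p d j then (α (((hOrd p j * k' : ℕ) : ZMod e))).map (fun r => r / hOrd p j)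
  else 0

/-- condition (2.6.1): `h_j` divides all parts `α_i^{(k)}`, and `h_j ∣ k`
whenever `α^{(k)} ≠ ∅`. -/
def Cond261 (e : ℕ) [NeZero e] (p j : ℕ) (α : ZMod e → Multiset ℕ) : Prop :=
  (∀ k, ∀ r ∈ α k, hOrd p j ∣ r) ∧ ∀ k : ZMod e, α k ≠ 0 → hOrd p j ∣ k.val

/-- `s_{α{j}}(𝒳_j)`. -/
noncomputable def schurBrace (e : ℕ) [NeZero e] (p d : ℕ) (m : ZMod e → ℕ) (xv : BIdx e m → ℂ)
    (j : ℕ) (α : ZMod e → Multiset ℕ) : ℂ :=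
  sAlphaSys (Esys p d j) (mmX e m) (vvX e p d m xv j) (braceF e p d j α)

/-- `p_{α[j]}(𝒳_j)` (2.6; the root of unity for the system `𝒳_j` is `ζ^h`). -/
noncomputable def pBracket (e : ℕ) [NeZero e] (p d : ℕ) (ζ : ℂ) (m : ZMod e → ℕ)
    (xv : BIdx e m → ℂ) (j : ℕ) (α : ZMod e → Multiset ℕ) : ℂ :=
  pAlphaSys (ζ ^ hOrd p j) (Esys p d j) (mmX e m) (vvX e p d m xv j) (bracketF e p d j α)

/-- `l(α[j])`. -/
noncomputable def lenBracket (e : ℕ) [NeZero e] (p d : ℕ) (j : ℕ)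
    (α : ZMod e → Multiset ℕ) : ℕ :=
  ∑ k ∈ Finset.range (Esys p d j), (bracketF e p d j α k).card

/-! ### Schur functions and power sums for `σ^q W` (2.10) -/

/-- the `j`-th component `s^j_{α,φ}` of the Schur function `𝐬_{α,φ}` for
`σ^q W` (2.10.1); the character `φ = φ_r` of `Γ_α = ⟨τ^c⟩ ≅ ℤ/(p/c)ℤ` is
encoded by `r`, via `φ_r(τ^j) = ζ^{drj}` for `c ∣ j`. -/
noncomputable def sTuple (e : ℕ) [NeZero e] (p d q : ℕ) (ζ : ℂ) (m : ZMod e → ℕ)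
    (xv : BIdx e m → ℂ) (α : ZMod e → Multiset ℕ) (r : ℕ) (j : ℕ) : ℂ :=
  if csize e d α ∣ j then
    ζ ^ (d * r * j) *
      ∑ i ∈ Finset.range (csize e d α),
        ζ ^ (q * i * d) * schurBrace e p d m xv j ((theta e d)^[i] α)
  else 0

/-- the `j`-th component `p^j_{β,b}` of the power sum `𝐩_{β,b}` for `σ^q W`
(2.10.2). -/
noncomputable def pTuple (e : ℕ) [NeZero e] (p d : ℕ) (ζ : ℂ) (m : ZMod e → ℕ)
    (xv : BIdx e m → ℂ) (β : ZMod e → Multiset ℕ) (b : ZMod e) (j : ℕ) : ℂ :=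
  if Cond261 e p j β then
    (hOrd p j : ℂ) ^ (lenBracket e p d j β) *
      zmpow e ζ (-(((Delta e β : ZMod e) + b) * ((j * d : ℕ) : ZMod e))) *
      pBracket e p d ζ m xv j β
  else 0

/-! ## The model for (extensions of) the irreducible characters of `W` -/

/-- trace of `f` on a subspace (junk `0` if not invariant). -/
noncomputable def traceOn {V : Type*} [AddCommGroup V] [Module ℂ V]
    (S : Submodule ℂ V) (f : V →ₗ[ℂ] V) : ℂ :=
  if h : ∀ v ∈ S, f v ∈ S then LinearMap.trace ℂ S (f.restrict h) else 0

/-- the scalar by which the torus element `diag dv ∈ G` acts on a highest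
weight vector of weight `α`. -/
noncomputable def weightOf (e : ℕ) [NeZero e] (m : ZMod e → ℕ) (α : ZMod e → Multiset ℕ)
    (dv : BIdx e m → ℂ) : ℂ :=
  ∏ b : BIdx e m, dv b ^ (lamOf (α b.1) b.2.val)

/-- the space of highest weight vectors of weight `α` in `V^{⊗n}`: the model
for the irreducible `W̃`-module `Z_α` (1.3.1, 1.4). -/
noncomputable def hwSubmodule (e n : ℕ) [NeZero e] (m : ZMod e → ℕ)
    (α : ZMod e → Multiset ℕ) : Submodule ℂ (TIdx e n m → ℂ) :=
  (⨅ g ∈ {g | IsUpperUni e m g},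
      Module.End.eigenspace (Matrix.mulVecLin (tensorPow e n m g)) 1) ⊓
    ⨅ dv : BIdx e m → ℂ,
      Module.End.eigenspace (Matrix.mulVecLin (tensorPow e n m (Matrix.diagonal dv)))
        (weightOf e m α dv)

/-- the model for the irreducible `W`-module `Z_{α,φ_r}`: the
`φ_r(τ^c)`-eigenspace of `τ^c` on `Z_α`, where `c = c_{α,p}` and
`φ_r(τ^c) = ζ^{cdr}`. -/
noncomputable def ZSub (e n : ℕ) [NeZero e] (d : ℕ) (m : ZMod e → ℕ)
    (hm : ∀ k, m (k + (d : ZMod e)) = m k) (ζ : ℂ) (α : ZMod e → Multiset ℕ) (r : ℕ) :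
    Submodule ℂ (TIdx e n m → ℂ) :=
  hwSubmodule e n m α ⊓
    Module.End.eigenspace (Matrix.mulVecLin ((tauMat e n d m hm) ^ (csize e d α)))
      (ζ ^ (csize e d α * d * r))

/-- The model for the irreducible character `χ^{α,φ_r}` of `W` and for its
chosen extension `χ̃^{α,φ_r}` to `⟨σ^q⟩ ⋉ W`: the trace of `w` on the model
`Z_{α,φ_r} ⊆ V^{⊗n}`. -/
noncomputable def charExt (e n : ℕ) [NeZero e] (d : ℕ) (m : ZMod e → ℕ)
    (hm : ∀ k, m (k + (d : ZMod e)) = m k) (ζ : ℂ) (α : ZMod e → Multiset ℕ) (r : ℕ)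
    (w : Wt e n) : ℂ :=
  traceOn (ZSub e n d m hm ζ α r) (Matrix.mulVecLin (rhoMat e n ζ m w))

/-! ## symbols, a-function, similarity; the reflection representation -/

/-- the multiset of entries of the symbol `Λ(α) = α + Λ⁰` of type `(r,0)`. -/
noncomputable def entriesSym (e : ℕ) [NeZero e] (m : ZMod e → ℕ) (rsym : ℕ)
    (α : ZMod e → Multiset ℕ) : Multiset ℕ :=
  (Finset.univ : Finset (BIdx e m)).val.map fun b =>
    lamOf (α b.1) b.2.val + rsym * (m b.1 - 1 - b.2.val)

noncomputable def pairMinSum (M : Multiset ℕ) : ℕ :=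
  (M.bind fun a => M.map fun b => min a b).sum

/-- the `a`-function (3.5.2) on symbols of type `(rsym, 0)`. -/
noncomputable def aVal (e : ℕ) [NeZero e] (m : ZMod e → ℕ) (rsym : ℕ)
    (α : ZMod e → Multiset ℕ) : ℕ :=
  pairMinSum (entriesSym e m rsym α) - pairMinSum (entriesSym e m rsym (fun _ => 0))

/-- similarity of symbols: equality of entries with multiplicities. -/
def SimSym (e : ℕ) [NeZero e] (m : ZMod e → ℕ) (rsym : ℕ) (α β : ZMod e → Multiset ℕ) : Prop :=
  entriesSym e m rsym α = entriesSym e m rsym β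

/-- the reflection representation `M = ℂ^n` of `W̃` (`w(e_i) = ζ^{a_i} e_{x(i)}`). -/
noncomputable def refMat (e n : ℕ) [NeZero e] (ζ : ℂ) (w : Wt e n) :
    Matrix (Fin n) (Fin n) ℂ :=
  fun i' i => if i' = w.right i then zmpow e ζ (w.left i').toAdd else 0

/-- The functional `R_q(f)` of (4.2.1), for a function `f` on the coset `σ^q W`. -/
noncomputable def Rq (e p d n : ℕ) [NeZero e] [NeZero n] (hp : p ∣ e) (ζ t : ℂ) (q : ℕ)
    (f : Wt e n → ℂ) : ℂ :=
  (ζ ^ (q * d) * t ^ (d * n) - 1) * (∏ i ∈ Finset.Icc 1 (n - 1), (t ^ (e * i) - 1)) *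
    (Nat.card (Wgrp e p n hp) : ℂ)⁻¹ *
    ∑ w ∈ Finset.univ.filter (fun w => inCoset e p n hp q w),
      (refMat e n ζ w).det * f w / (t • (1 : Matrix (Fin n) (Fin n) ℂ) - refMat e n ζ w).det

/-- `N^*`: the number of reflections in `W`. -/
noncomputable def Nstar (e p n : ℕ) [NeZero e] (hp : p ∣ e) (ζ : ℂ) : ℕ :=
  Nat.card {w : Wt e n // w ∈ Wgrp e p n hp ∧ w ≠ 1 ∧ (refMat e n ζ w - 1).rank = 1}

end GreenII

/-!
A diagonal entry of `Dτ^j w` is nonzero only at the colourings of the positions that intertwine the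
permutation of `w` with the shift `k ↦ k + jd`, so the trace is a sum over such colourings.
Conjugation by `u` multiplies it by `ζ^{-(∑ u_i) jd}`: this factor is `1` for `u ∈ W`, and for
`u = t_{i_m}^b` it trades the exceptional cycle of `w_α(b)` for an ordinary one at the cost of
`ζ^{-bjd}`. For `w_α(0)` the sum factors over the cycles. An admissible colouring of a cycle of
length `r` is determined by one value `c`, and exists only if `r · jd = 0` in `ℤ/eℤ`, that is, if
`h ∣ r`. A cycle of colour `k` then contributes `ζ^{-kjd} ∑_l ζ^{kl} p_{r/h}(X^{(l)})`, and as
`X^{(l)}` is invariant under `l ↦ l + jd`, this vanishes unless `ζ^{kjd} = 1`, that is, unless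
`h ∣ k`, and is otherwise `h` times a sum over representatives of the cosets of `⟨jd⟩`.
-/

namespace GreenII

open Finset Function

section RangeProducts

variable {M : Type*} [CommMonoid M]

lemma prod_range_succ_of_periodic {f : ℕ → M} {N : ℕ} (hf : Periodic f N) :
    ∏ s ∈ range N, f (s + 1) = ∏ s ∈ range N, f s := by
  cases N with
  | zero => rfl
  | succ N =>
    rw [prod_range_succ, prod_range_succ', ← hf 0, zero_add]

@[to_additive]
lemma prod_range_eq_pow_of_periodic {f : ℕ → M} {N : ℕ} (hf : Periodic f N) (t : ℕ) :
    ∏ s ∈ range (N * t), f s = (∏ s ∈ range N, f s) ^ t := by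
  induction t with
  | zero => simp
  | succ t ih =>
    have hshift : ∀ s, f (N * t + s) = f s := fun s => by
      rw [add_comm, mul_comm]
      exact hf.nat_mul t s
    rw [Nat.mul_succ, prod_range_add, ih, pow_succ, prod_congr rfl fun s _ => hshift s]

lemma periodic_comp_add_nsmul {A β : Type*} [AddCommMonoid A] {n : ℕ} {g : A} (hg : n • g = 0)
    (u : A → β) (k : A) : Periodic (fun s : ℕ => u (k + s • g)) n := fun s => by
  simp only [add_nsmul, hg, add_zero]

lemma prod_range_eq_prod_range_mul_of_not_dvd {f : ℕ → M} {h E N : ℕ} (hh : 0 < h)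
    (hN : h * E = N) (hf : ∀ k, ¬ h ∣ k → f k = 1) :
    ∏ k ∈ range N, f k = ∏ l ∈ range E, f (h * l) := by
  subst hN
  refine (prod_of_injOn (h * ·) (mul_right_injective₀ hh.ne').injOn (fun l hl => ?_)
    (fun k hk hmem => hf k ?_) fun l _ => rfl).symm
  · simpa [hh] using hl
  · rintro ⟨l, rfl⟩
    exact hmem ⟨l, by simpa [hh] using hk, rfl⟩

end RangeProducts

section ZModPeriodic

variable {e : ℕ} [NeZero e]

@[to_additive]
lemma prod_zmod_eq_prod_range {M : Type*} [CommMonoid M] (F : ZMod e → M) :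
    ∏ x, F x = ∏ k ∈ range e, F k :=
  prod_nbij' ZMod.val (fun k => (k : ZMod e)) (fun x _ => mem_range.2 x.val_lt) (by simp)
    (by simp) (fun k hk => ZMod.val_cast_of_lt (mem_range.1 hk)) (by simp)

/-- Bézout: the subgroup of `ZMod e` generated by `g` contains its index. -/
lemma exists_natCast_div_addOrderOf_eq_mul (g : ZMod e) :
    ∃ y : ℤ, ((e / addOrderOf g : ℕ) : ZMod e) = y * g := by
  have hindex : e / addOrderOf g = e.gcd g.val := by
    rw [← ZMod.natCast_zmod_val g, ZMod.addOrderOf_coe _ (NeZero.ne e), ZMod.natCast_zmod_val,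
      Nat.div_div_self (Nat.gcd_dvd_left e g.val) (NeZero.ne e)]
  refine ⟨e.gcdB g.val, ?_⟩
  have hbezout := congrArg (Int.cast : ℤ → ZMod e) (Nat.gcd_eq_gcd_ab e g.val)
  rw [hindex]
  simpa [mul_comm] using hbezout

lemma sum_zmod_eq_addOrderOf_nsmul_of_periodic {M : Type*} [AddCommMonoid M] {g : ZMod e}
    {F : ZMod e → M} (hF : Periodic F g) :
    ∑ x, F x = addOrderOf g • ∑ k ∈ range (e / addOrderOf g), F k := by
  obtain ⟨y, hy⟩ := exists_natCast_div_addOrderOf_eq_mul g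
  have hE : Periodic (fun k : ℕ => F k) (e / addOrderOf g) := fun k => by
    simp only [Nat.cast_add, hy]
    exact hF.int_mul y k
  have hdvd : addOrderOf g ∣ e := addOrderOf_dvd_of_nsmul_eq_zero (by simp)
  rw [← sum_range_eq_nsmul_of_periodic hE, Nat.div_mul_cancel hdvd, sum_zmod_eq_sum_range]

end ZModPeriodic

section AddChar

variable {A R : Type*}

lemma addChar_map_sum [AddCommMonoid A] [CommMonoid R] {ι : Type*} (ψ : AddChar A R)
    (s : Finset ι) (u : ι → A) : ψ (∑ i ∈ s, u i) = ∏ i ∈ s, ψ (u i) :=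
  map_prod ψ.toMonoidHom (fun i => Multiplicative.ofAdd (u i)) s

lemma sum_addChar_mul_of_periodic_eq_zero [AddCommGroup A] [Fintype A] [CommRing R]
    [IsDomain R] {χ : AddChar A R} {P : A → R} {g : A} (hP : Periodic P g) (hχ : χ g ≠ 1) :
    ∑ x, χ x * P x = 0 := by
  have hshift : ∑ x, χ x * P x = χ g * ∑ x, χ x * P x := by
    rw [mul_sum, ← Equiv.sum_comp (Equiv.addRight g) fun x => χ x * P x]
    refine sum_congr rfl fun x _ => ?_
    rw [Equiv.coe_addRight, hP, AddChar.map_add_eq_mul, mul_comm (χ x), mul_assoc]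
  by_contra hne
  exact hχ (mul_right_cancel₀ hne (by rw [one_mul, ← hshift]))

end AddChar

section SemiconjSum

variable {ι κ B R : Type*} [Fintype ι] [DecidableEq ι] [Fintype κ] [DecidableEq κ] [Fintype B]
  [CommSemiring R]

/-- The sum of `∏ s, f s (c s)` over the colourings `c : ι → B` that intertwine the permutation `x`
of the positions with the self-map `σ` of the colours. This is the trace on a tensor power of a
product of a diagonal operator, `σ^{⊗ ι}` and the permutation `x` of the factors. -/
noncomputable def semiconjSum (x : Equiv.Perm ι) (σ : B → B) (f : ι → B → R) : R :=
  ∑ c : ι → B with Semiconj c x σ, ∏ s, f s (c s)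

variable (σ : B → B)

lemma semiconjSum_permCongr (φ : ι ≃ κ) (x : Equiv.Perm ι) (f : κ → B → R) :
    semiconjSum (φ.permCongr x) σ f = semiconjSum x σ fun s => f (φ s) := by
  refine sum_equiv (φ.arrowCongr (Equiv.refl B)).symm (fun c => ?_) fun c _ =>
    (φ.prod_comp fun t => f t (c t)).symm
  rw [mem_filter_univ, mem_filter_univ]
  exact φ.symm.forall_congr fun {t} => by simp

lemma semiconjSum_sigmaCongrRight {r : κ → Type*} [∀ i, Fintype (r i)]
    [∀ i, DecidableEq (r i)] (x : ∀ i, Equiv.Perm (r i)) (f : (Σ i, r i) → B → R) :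
    semiconjSum (Equiv.sigmaCongrRight x) σ f =
      ∏ i, semiconjSum (x i) σ fun s => f ⟨i, s⟩ := by
  simp only [semiconjSum, prod_univ_sum]
  refine sum_equiv (Equiv.piCurry fun _ _ => B) (fun c => ?_) fun c _ => ?_
  · simp only [Fintype.mem_piFinset, mem_filter_univ]
    exact Sigma.forall
  · exact Fintype.prod_sigma _

/-- A colouring of a cycle that intertwines the rotation with `σ` is determined by its value
at `0`. -/
lemma semiconjSum_finRotate [DecidableEq B] (r : ℕ) (f : Fin (r + 1) → B → R) :
    semiconjSum (finRotate (r + 1)) σ f =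
      ∑ b with IsPeriodicPt σ (r + 1) b, ∏ s, f s (σ^[s] b) := by
  have hval (c : Fin (r + 1) → B) (hc : Semiconj c (finRotate (r + 1)) σ) (s : Fin (r + 1)) :
      σ^[s] (c 0) = c s := by
    induction s using Fin.induction with
    | zero => rfl
    | succ i ih =>
      rw [Fin.val_succ, iterate_succ_apply', ← Fin.val_castSucc, ih, ← hc, finRotate_apply,
        Fin.coeSucc_eq_succ]
  refine sum_nbij' (fun c => c 0) (fun b s => σ^[s] b) ?_ ?_ ?_ (fun b _ => rfl) ?_
  · intro c hc
    rw [mem_filter_univ] at hc ⊢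
    have hlast := hc (Fin.last r)
    rw [finRotate_last, ← hval c hc (Fin.last r), ← iterate_succ_apply' σ] at hlast
    exact hlast.symm
  · intro b hb
    rw [mem_filter_univ] at hb ⊢
    intro s
    induction s using Fin.lastCases with
    | last => rw [finRotate_last, ← iterate_succ_apply' σ]; exact hb.symm
    | cast i =>
      simp only [finRotate_apply, Fin.coeSucc_eq_succ, Fin.val_succ, iterate_succ_apply',
        Fin.val_castSucc]
  · intro c hc
    exact funext (hval c (by simpa using hc))
  · intro c hc
    exact prod_congr rfl fun s _ => by rw [hval c (by simpa using hc) s]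

end SemiconjSum

section Shift

variable {e g d : ℕ} [NeZero e] {m : ZMod e → ℕ}

lemma tauB_iterate_fst (hg : ∀ k, m (k + (g : ZMod e)) = m k) (N : ℕ) (c : BIdx e m) :
    ((tauB e g m hg)^[N] c).1 = c.1 + N • (g : ZMod e) := by
  induction N with
  | zero => simp
  | succ N ih =>
    rw [iterate_succ_apply', succ_nsmul, ← add_assoc, ← ih]
    rfl

lemma tauB_iterate_snd_val (hg : ∀ k, m (k + (g : ZMod e)) = m k) (N : ℕ) (c : BIdx e m) :
    (((tauB e g m hg)^[N] c).2 : ℕ) = c.2 := by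
  induction N with
  | zero => rfl
  | succ N ih =>
    rw [iterate_succ_apply', ← ih]
    rfl

lemma BIdx_ext {b c : BIdx e m} (hfst : b.1 = c.1) (hsnd : (b.2 : ℕ) = c.2) : b = c :=
  Sigma.ext hfst ((Fin.heq_ext_iff (congrArg m hfst)).2 hsnd)

lemma isPeriodicPt_tauB_iff (hg : ∀ k, m (k + (g : ZMod e)) = m k) (N : ℕ) (c : BIdx e m) :
    IsPeriodicPt (tauB e g m hg) N c ↔ addOrderOf (g : ZMod e) ∣ N := by
  rw [addOrderOf_dvd_iff_nsmul_eq_zero]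
  refine ⟨fun h => ?_, fun h => BIdx_ext ?_ (tauB_iterate_snd_val hg N c)⟩
  · simpa [tauB_iterate_fst hg] using congrArg Sigma.fst h
  · rw [tauB_iterate_fst hg, h, add_zero]

lemma tauB_iterate (hm : ∀ k, m (k + (d : ZMod e)) = m k) (j : ℕ)
    (hjd : ∀ k, m (k + ((j * d : ℕ) : ZMod e)) = m k) :
    (tauB e d m hm)^[j] = tauB e (j * d) m hjd :=
  funext fun c => BIdx_ext (by rw [tauB_iterate_fst, nsmul_eq_mul, ← Nat.cast_mul]; rfl)
    (tauB_iterate_snd_val hm j c)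

lemma tauMat_pow_apply {n : ℕ} (hm : ∀ k, m (k + (d : ZMod e)) = m k) (j : ℕ)
    (b' b : TIdx e n m) :
    (tauMat e n d m hm ^ j) b' b = if b' = (tauB e d m hm)^[j] ∘ b then 1 else 0 := by
  have hone (b' b : TIdx e n m) :
      tauMat e n d m hm b' b = if b' = tauB e d m hm ∘ b then 1 else 0 := by
    simp [tauMat, tensorPow, tauV, prod_ite_zero, funext_iff]
  induction j generalizing b' with
  | zero => simp [Matrix.one_apply]
  | succ j ih =>
    simp only [pow_succ', Matrix.mul_apply, hone, ih, mul_ite, mul_one, mul_zero, sum_ite_eq',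
      mem_univ, if_true, iterate_succ', comp_assoc]

lemma xv_eq_xval (xv : BIdx e m → ℂ) (c : BIdx e m) : xv c = xval e m xv c.1 c.2 := by
  rw [xval, dif_pos c.2.2]

end Shift

section TwistedTrace

variable {e g : ℕ} [NeZero e] {m : ZMod e → ℕ} (ψ : AddChar (ZMod e) ℂ)
  (hg : ∀ k, m (k + (g : ZMod e)) = m k) (xv : BIdx e m → ℂ)
  {ι κ : Type*} [Fintype ι] [DecidableEq ι] [Fintype κ] [DecidableEq κ]

/-- The trace of `D τ^j w` on a tensor power whose factors are labelled by `ι`, where `g = j d` is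
the shift of the index `k` effected by `τ^j`, and `w` has permutation part `x` and diagonal part
`a`. The term `-g` appears since `w` acts before `τ^j`. -/
noncomputable def twistedTrace (x : Equiv.Perm ι) (a : ι → ZMod e) : ℂ :=
  semiconjSum x (tauB e g m hg) fun s c => xv c * ψ (a s * (c.1 - g))

lemma twistedTrace_permCongr (φ : ι ≃ κ) (x : Equiv.Perm ι) (a : κ → ZMod e) :
    twistedTrace ψ hg xv (φ.permCongr x) a = twistedTrace ψ hg xv x (a ∘ φ) :=
  semiconjSum_permCongr _ φ x _

lemma twistedTrace_sigmaCongrRight {r : κ → Type*} [∀ i, Fintype (r i)] [∀ i, DecidableEq (r i)]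
    (x : ∀ i, Equiv.Perm (r i)) (a : (Σ i, r i) → ZMod e) :
    twistedTrace ψ hg xv (Equiv.sigmaCongrRight x) a =
      ∏ i, twistedTrace ψ hg xv (x i) fun s => a ⟨i, s⟩ :=
  semiconjSum_sigmaCongrRight _ x _

/-- The diagonal part on the left is that of the conjugate of `w` by the diagonal element `v`. -/
lemma twistedTrace_add_coboundary (x : Equiv.Perm ι) (a v : ι → ZMod e) :
    twistedTrace ψ hg xv x (fun s => a s + (v s - v (x.symm s))) =
      ψ (-((∑ s, v s) * g)) * twistedTrace ψ hg xv x a := by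
  rw [twistedTrace, twistedTrace, semiconjSum, semiconjSum, mul_sum]
  refine sum_congr rfl fun c hc => ?_
  have hshift (s : ι) : (c (x s)).1 = (c s).1 + g :=
    congrArg Sigma.fst ((mem_filter_univ _).1 hc s)
  have hcoboundary :
      ∑ s, (v s - v (x.symm s)) * ((c s).1 - g) = -((∑ s, v s) * (g : ZMod e)) := by
    have hreindex : ∑ s, v (x.symm s) * ((c s).1 - g) = ∑ s, v s * (c s).1 := by
      rw [← Equiv.sum_comp x]
      simp [hshift]
    simp only [sub_mul, sum_sub_distrib, hreindex]
    simp only [mul_sub, sum_sub_distrib, sum_mul]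
    ring
  rw [← hcoboundary, addChar_map_sum, ← prod_mul_distrib]
  refine prod_congr rfl fun s _ => ?_
  rw [add_mul, AddChar.map_add_eq_mul]
  ring

lemma twistedTrace_conj {n : ℕ} (u w : Wt e n) :
    twistedTrace ψ hg xv (u * w * u⁻¹).right (fun s => ((u * w * u⁻¹).left s).toAdd) =
      ψ (-((∑ s, (u.left s).toAdd) * g)) *
        twistedTrace ψ hg xv w.right fun s => (w.left s).toAdd := by
  have hright : (u * w * u⁻¹).right = u.right.permCongr w.right := rfl
  have hleft : (fun s => ((u * w * u⁻¹).left s).toAdd) = fun s =>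
      (w.left (u.right.symm s)).toAdd +
        ((u.left s).toAdd - (u.left ((u.right.permCongr w.right).symm s)).toAdd) := by
    funext s
    have hmul : ((u * w * u⁻¹).left s).toAdd = (u.left s).toAdd + (w.left (u.right.symm s)).toAdd
        + -(u.left ((u.right.permCongr w.right).symm s)).toAdd := rfl
    rw [hmul]
    ring
  rw [hright, hleft, twistedTrace_add_coboundary, twistedTrace_permCongr]
  simp [comp_def]

end TwistedTrace

section Groups

variable {e p d n j : ℕ} [NeZero e]

lemma sum_left_mul_eq_zero_of_mem_Wgrp {hp : p ∣ e} (hed : p * d = e) {u : Wt e n}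
    (hu : u ∈ Wgrp e p n hp) : (∑ s, (u.left s).toAdd) * ((j * d : ℕ) : ZMod e) = 0 := by
  have hcast : ZMod.castHom hp (ZMod p) (∑ s, (u.left s).toAdd) = 0 :=
    (map_sum _ _ _).trans (congrArg Multiplicative.toAdd hu)
  generalize ∑ s, (u.left s).toAdd = A at hcast ⊢
  rw [← ZMod.natCast_zmod_val A] at hcast ⊢
  rw [map_natCast, ZMod.natCast_eq_zero_iff] at hcast
  rw [← Nat.cast_mul, ZMod.natCast_eq_zero_iff, mul_left_comm]
  exact (hed.symm.dvd.trans (mul_dvd_mul_right hcast d)).mul_left j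

variable {m : ZMod e → ℕ} {ζ : ℂ}

lemma trace_eq_twistedTrace (hζ : IsPrimitiveRoot ζ e) (hm : ∀ k, m (k + (d : ZMod e)) = m k)
    (hjd : ∀ k, m (k + ((j * d : ℕ) : ZMod e)) = m k) (xv : BIdx e m → ℂ) (w : Wt e n) :
    Matrix.trace (Dmat e n m xv * tauMat e n d m hm ^ j * rhoMat e n ζ m w) =
      twistedTrace (AddChar.zmodChar e hζ.pow_eq_one) hjd xv w.right
        fun s => (w.left s).toAdd := by
  rw [Matrix.trace, twistedTrace, semiconjSum, sum_filter]
  refine sum_congr rfl fun c _ => ?_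
  have hiff : c = tauB e (j * d) m hjd ∘ c ∘ w.right.symm ↔
      Semiconj c w.right (tauB e (j * d) m hjd) := by
    rw [← comp_assoc, Equiv.eq_comp_symm, semiconj_iff_comp_eq]
  rw [Matrix.diag_apply, mul_assoc, Dmat, Matrix.diagonal_mul, Matrix.mul_apply]
  simp only [rhoMat, tauMat_pow_apply, tauB_iterate hm j hjd, mul_ite, mul_zero, sum_ite_eq',
    mem_univ, if_true, hiff, ite_mul, one_mul, zero_mul]
  split_ifs with hc
  swap
  · rfl
  rw [prod_mul_distrib]
  refine congrArg _ (prod_congr rfl fun s _ => ?_)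
  have hfst : (c s).1 = (c (w.right.symm s)).1 + ((j * d : ℕ) : ZMod e) :=
    congrArg Sigma.fst (congrFun (hiff.2 hc) s)
  rw [comp_apply, hfst, add_sub_cancel_right, ← AddChar.zmodChar_apply' hζ.pow_eq_one]
  simp

end Groups

section Cycle

variable {e g : ℕ} [NeZero e] (ψ : AddChar (ZMod e) ℂ) {m : ZMod e → ℕ}
  (hg : ∀ k, m (k + (g : ZMod e)) = m k) (xv : BIdx e m → ℂ)

/-- The variable `X_i^{(k)}`: the product of `x_i^{(k')}` over the coset `k' ∈ k + ⟨g⟩`. -/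
noncomputable def orbitVar (m : ZMod e → ℕ) (xv : BIdx e m → ℂ) (g : ZMod e) (k : ZMod e)
    (i : ℕ) : ℂ :=
  ∏ s ∈ range (addOrderOf g), xval e m xv (k + s • g) i

/-- The contribution to the trace of one cycle `t_{i_1}^k z` of length `r`. -/
noncomputable def cycleTrace (k : ZMod e) (r : ℕ) : ℂ :=
  twistedTrace ψ hg xv (finRotate r) fun s => if (s : ℕ) = 0 then k else 0

lemma orbitVar_periodic (g : ZMod e) : Periodic (orbitVar m xv g) g := fun k => by
  funext i
  have hper := periodic_comp_add_nsmul (addOrderOf_nsmul_eq_zero g)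
    (fun k => xval e m xv k i) k
  rw [orbitVar, orbitVar, ← prod_range_succ_of_periodic hper]
  simp only [succ_nsmul', add_assoc]

lemma prod_xval_eq_orbitVar_pow (g k : ZMod e) (i t : ℕ) :
    ∏ s ∈ range (addOrderOf g * t), xval e m xv (k + s • g) i = orbitVar m xv g k i ^ t :=
  prod_range_eq_pow_of_periodic
    (periodic_comp_add_nsmul (addOrderOf_nsmul_eq_zero g) (fun k => xval e m xv k i) k) t

lemma cycleTrace_eq_zero_of_not_dvd {k : ZMod e} {r : ℕ} (hr : ¬ addOrderOf (g : ZMod e) ∣ r) :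
    cycleTrace ψ hg xv k r = 0 := by
  obtain _ | r := r
  · exact absurd (dvd_zero _) hr
  · rw [cycleTrace, twistedTrace, semiconjSum_finRotate, filter_false_of_mem, sum_empty]
    exact fun c _ hc => hr ((isPeriodicPt_tauB_iff hg _ c).1 hc)

lemma cycleTrace_mul_eq_sum (k : ZMod e) {t : ℕ} (ht : 0 < t) :
    cycleTrace ψ hg xv k (addOrderOf (g : ZMod e) * t) = ψ (-(k * g)) *
      ∑ l, ψ (k * l) * ∑ i ∈ range (m l), orbitVar m xv g l i ^ t := by
  obtain ⟨r, hr⟩ := Nat.exists_eq_add_one.2 (Nat.mul_pos (addOrderOf_pos (g : ZMod e)) ht)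
  have hperiodic : ∀ c : BIdx e m, IsPeriodicPt (tauB e g m hg) (r + 1) c := fun c =>
    (isPeriodicPt_tauB_iff hg _ c).2 (hr ▸ dvd_mul_right _ t)
  rw [cycleTrace, hr, twistedTrace, semiconjSum_finRotate,
    filter_true_of_mem fun c _ => hperiodic c, Fintype.sum_sigma, mul_sum]
  refine sum_congr rfl fun l _ => ?_
  rw [mul_sum, mul_sum, sum_range]
  refine sum_congr rfl fun i _ => ?_
  rw [← prod_xval_eq_orbitVar_pow, hr, prod_range, prod_mul_distrib, mul_comm, ← mul_assoc,
    ← AddChar.map_add_eq_mul]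
  congr 1
  · rw [Fin.prod_univ_succ]
    simp [mul_sub, neg_add_eq_sub]
  · exact prod_congr rfl fun s _ => by
      rw [xv_eq_xval xv, tauB_iterate_snd_val, tauB_iterate_fst]

lemma cycleTrace_mul_eq_zero {ψ : AddChar (ZMod e) ℂ} (hψ : ψ.IsPrimitive) {k : ZMod e} {t : ℕ}
    (ht : 0 < t) (hk : ¬ addOrderOf (g : ZMod e) ∣ k.val) :
    cycleTrace ψ hg xv k (addOrderOf (g : ZMod e) * t) = 0 := by
  have hχ : ψ.mulShift k g ≠ 1 := by
    rwa [AddChar.mulShift_apply, Ne, hψ.zmod_char_eq_one_iff, ← ZMod.natCast_zmod_val k,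
      ← nsmul_eq_mul, ← addOrderOf_dvd_iff_nsmul_eq_zero]
  have hperiodic : Periodic (fun l => ∑ i ∈ range (m l), orbitVar m xv g l i ^ t) (g : ZMod e) :=
    fun l => by simp only [hg, orbitVar_periodic xv (g : ZMod e) l]
  rw [cycleTrace_mul_eq_sum ψ hg xv k ht]
  exact mul_eq_zero_of_right _ (sum_addChar_mul_of_periodic_eq_zero hperiodic hχ)

lemma cycleTrace_mul_eq_pGenSys {k : ZMod e} {t : ℕ} (ht : 0 < t)
    (hk : addOrderOf (g : ZMod e) ∣ k.val) :
    cycleTrace ψ hg xv k (addOrderOf (g : ZMod e) * t) = ψ (-(k * g)) *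
      (addOrderOf (g : ZMod e) * pGenSys (ψ 1 ^ addOrderOf (g : ZMod e))
        (e / addOrderOf (g : ZMod e)) (mmX e m) (fun l => orbitVar m xv g l)
        (k.val / addOrderOf (g : ZMod e)) t) := by
  have hkg : k * g = 0 := by
    rw [← ZMod.natCast_zmod_val k, ← nsmul_eq_mul, ← addOrderOf_dvd_iff_nsmul_eq_zero]
    exact hk
  have hperiodic : Periodic
      (fun l => ψ (k * l) * ∑ i ∈ range (m l), orbitVar m xv g l i ^ t) (g : ZMod e) := fun l => by
    simp only [hg, orbitVar_periodic xv (g : ZMod e) l, mul_add, hkg, add_zero]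
  rw [cycleTrace_mul_eq_sum ψ hg xv k ht, sum_zmod_eq_addOrderOf_nsmul_of_periodic hperiodic,
    nsmul_eq_mul, pGenSys, if_neg ht.ne']
  congr 2
  refine sum_congr rfl fun l _ => ?_
  rw [← pow_mul, ← mul_assoc, Nat.mul_div_cancel' hk, ← AddChar.map_nsmul_eq_pow, nsmul_one,
    Nat.cast_mul, ZMod.natCast_zmod_val, mmX]

end Cycle

section Representative

variable {e : ℕ} [NeZero e]

lemma coe_partsList (α : ZMod e → Multiset ℕ) :
    (partsList e α : Multiset (ℕ × ZMod e)) = univ.val.bind fun k => (α k).map fun r => (r, k) := by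
  rw [partsList, ← Multiset.coe_bind]
  simp only [← Multiset.map_coe, Multiset.coe_toList, coe_toList]

@[to_additive]
lemma prod_map_partsList {M : Type*} [CommMonoid M] (α : ZMod e → Multiset ℕ)
    (F : ℕ × ZMod e → M) :
    ((partsList e α).map F).prod = ∏ k, ((α k).map fun r => F (r, k)).prod := by
  rw [← Multiset.prod_coe, ← Multiset.map_coe, coe_partsList, Multiset.map_bind,
    Multiset.prod_bind]
  simp only [Multiset.map_map, comp_def, Finset.prod]

lemma pos_of_mem_partsList {n : ℕ} {α : ZMod e → Multiset ℕ} (hα : IsEPartition e n α)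
    {q : ℕ × ZMod e} (hq : q ∈ partsList e α) : 0 < q.1 := by
  rw [← Multiset.mem_coe, coe_partsList, Multiset.mem_bind] at hq
  obtain ⟨k, -, hk⟩ := hq
  obtain ⟨r, hr, rfl⟩ := Multiset.mem_map.1 hk
  exact hα.1 k r hr

lemma finRotate_symm_val_eq_sub_one_iff {r : ℕ} (s : Fin r) :
    ((finRotate r).symm s : ℕ) = r - 1 ↔ (s : ℕ) = 0 := by
  obtain _ | r := r
  · exact s.elim0
  · change ((finRotate (r + 1)).symm s : ℕ) = Fin.last r ↔ (s : ℕ) = (0 : Fin (r + 1))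
    rw [← Fin.ext_iff, ← Fin.ext_iff, Equiv.symm_apply_eq, finRotate_last]

variable {g : ℕ} (ψ : AddChar (ZMod e) ℂ) {m : ZMod e → ℕ}
  (hg : ∀ k, m (k + (g : ZMod e)) = m k) (xv : BIdx e m → ℂ)

/-- The exceptional cycle of `w_α(b)` arises from that of `w_α(0)` on conjugating by `t_{i_m}^b`. -/
lemma aexc_eq_add_coboundary (L : List (ℕ × ZMod e)) (b : ZMod e) :
    let v : (Σ i : Fin L.length, Fin (L.get i).1) → ZMod e := fun x =>
      if (x.1 : ℕ) = 0 ∧ (x.2 : ℕ) = (L.get x.1).1 - 1 then b else 0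
    aexc e L b = fun x => (if (x.2 : ℕ) = 0 then (L.get x.1).2 else 0) +
      (v x - v ((Equiv.sigmaCongrRight fun i => finRotate (L.get i).1).symm x)) := by
  funext ⟨i, s⟩
  have hrot : (Equiv.sigmaCongrRight fun i => finRotate (L.get i).1).symm ⟨i, s⟩ =
      ⟨i, (finRotate (L.get i).1).symm s⟩ := rfl
  rw [hrot]
  simp only [aexc, finRotate_symm_val_eq_sub_one_iff]
  by_cases hi : (i : ℕ) = 0 <;> by_cases hs : (s : ℕ) = 0 <;>
    simp only [hi, hs, true_and, false_and, if_true, if_false] <;> ring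

lemma twistedTrace_aexc {L : List (ℕ × ZMod e)} (hne : L ≠ []) (hpos : ∀ q ∈ L, 0 < q.1)
    (b : ZMod e) :
    twistedTrace ψ hg xv (Equiv.sigmaCongrRight fun i => finRotate (L.get i).1) (aexc e L b) =
      ψ (-(b * g)) * (L.map fun q => cycleTrace ψ hg xv q.2 q.1).prod := by
  let i₀ : Fin L.length := ⟨0, List.length_pos_iff.2 hne⟩
  have hr : (L.get i₀).1 - 1 < (L.get i₀).1 := Nat.sub_one_lt (hpos _ (L.get_mem i₀)).ne'
  rw [aexc_eq_add_coboundary, twistedTrace_add_coboundary, twistedTrace_sigmaCongrRight,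
    Fintype.sum_eq_single ⟨i₀, ⟨_, hr⟩⟩, if_pos ⟨rfl, rfl⟩,
    ← Fin.prod_univ_fun_getElem L fun q => cycleTrace ψ hg xv q.2 q.1]
  · rfl
  · rintro ⟨i, s⟩ hx
    refine if_neg fun h => hx ?_
    obtain rfl : i = i₀ := Fin.ext h.1
    exact congrArg (Sigma.mk i₀) (Fin.ext h.2)

lemma twistedTrace_wrep {n : ℕ} [NeZero n] {α : ZMod e → Multiset ℕ} (hα : IsEPartition e n α)
    (b : ZMod e) :
    twistedTrace ψ hg xv (wrep e n α b).right (fun s => ((wrep e n α b).left s).toAdd) =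
      ψ (-(b * g)) * ∏ k, ((α k).map (cycleTrace ψ hg xv k)).prod := by
  have hsum : ((partsList e α).map Prod.fst).sum = n := by
    rw [sum_map_partsList, ← hα.2]
    simp only [Multiset.map_id']
  have hcard : Fintype.card (Σ i : Fin (partsList e α).length, Fin ((partsList e α).get i).1) = n :=
    by simpa [Fintype.card_sigma] using hsum
  have hne : partsList e α ≠ [] := fun h => NeZero.ne n (by rw [← hsum, h]; rfl)
  have hperm : (wrep e n α b).right = (Fintype.equivFinOfCardEq hcard).permCongr
      (Equiv.sigmaCongrRight fun i => finRotate ((partsList e α).get i).1) := by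
    rw [wrep, dif_pos hcard]
    rfl
  have hcolour : (fun s => ((wrep e n α b).left s).toAdd) =
      aexc e (partsList e α) b ∘ (Fintype.equivFinOfCardEq hcard).symm := by
    rw [wrep, dif_pos hcard]
    rfl
  rw [hperm, hcolour, twistedTrace_permCongr, comp_assoc, Equiv.symm_comp_self, comp_id,
    twistedTrace_aexc ψ hg xv hne (fun q hq => pos_of_mem_partsList hα hq), prod_map_partsList]

end Representative

section Bracket

variable {e p d j : ℕ}

lemma hOrd_mul_Esys (hed : p * d = e) : hOrd p j * Esys p d j = e := by
  have hdvd : hOrd p j ∣ p := addOrderOf_dvd_of_nsmul_eq_zero (by simp)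
  rw [Esys, ← mul_assoc, Nat.mul_div_cancel' hdvd, hed]

variable [NeZero e]

lemma addOrderOf_natCast_mul_eq_hOrd (hed : p * d = e) :
    addOrderOf ((j * d : ℕ) : ZMod e) = hOrd p j := by
  obtain ⟨hp, hd⟩ := mul_ne_zero_iff.1 (hed ▸ NeZero.ne e)
  rw [ZMod.addOrderOf_coe _ (NeZero.ne e), hOrd, ZMod.addOrderOf_coe _ hp, ← hed,
    Nat.gcd_mul_right, Nat.mul_div_mul_right _ _ (Nat.pos_of_ne_zero hd)]

lemma hOrd_pos (hed : p * d = e) : 0 < hOrd p j :=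
  addOrderOf_natCast_mul_eq_hOrd hed ▸ addOrderOf_pos _

variable {m : ZMod e → ℕ} (xv : BIdx e m → ℂ)

lemma orbitVar_eq_vvX (hed : p * d = e) :
    (fun l : ℕ => orbitVar m xv ((j * d : ℕ) : ZMod e) l) = vvX e p d m xv j := by
  funext l i
  rw [orbitVar, vvX, Xvar, addOrderOf_natCast_mul_eq_hOrd hed]
  simp [mul_assoc]

variable {ψ : AddChar (ZMod e) ℂ} (hjd : ∀ k, m (k + ((j * d : ℕ) : ZMod e)) = m k) {n : ℕ}
  {α : ZMod e → Multiset ℕ}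

lemma cycleTrace_eq_pGenSys_vvX (hed : p * d = e) {k : ZMod e} {r : ℕ} (hr : 0 < r)
    (hhr : hOrd p j ∣ r) (hhk : hOrd p j ∣ k.val) :
    cycleTrace ψ hjd xv k r = ψ (-(k * (j * d : ℕ))) * (hOrd p j *
      pGenSys (ψ 1 ^ hOrd p j) (Esys p d j) (mmX e m) (vvX e p d m xv j) (k.val / hOrd p j)
        (r / hOrd p j)) := by
  obtain ⟨t, rfl⟩ := hhr
  have hh := addOrderOf_natCast_mul_eq_hOrd (j := j) hed
  have hE : e / hOrd p j = Esys p d j :=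
    Nat.div_eq_of_eq_mul_right (hOrd_pos hed) (hOrd_mul_Esys hed).symm
  have hcycle := cycleTrace_mul_eq_pGenSys ψ hjd xv (Nat.pos_of_mul_pos_left hr) (hh ▸ hhk)
  rw [Nat.mul_div_cancel_left t (hOrd_pos hed)]
  rwa [hh, hE, orbitVar_eq_vvX xv hed] at hcycle

lemma prod_cycleTrace_eq_zero_of_not_cond261 (hψ : ψ.IsPrimitive) (hed : p * d = e)
    (hα : IsEPartition e n α) (hcond : ¬ Cond261 e p j α) :
    ∏ k, ((α k).map (cycleTrace ψ hjd xv k)).prod = 0 := by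
  obtain ⟨k, r, hr, hdvd⟩ : ∃ k, ∃ r ∈ α k, ¬ (hOrd p j ∣ r ∧ hOrd p j ∣ k.val) := by
    contrapose! hcond
    refine ⟨fun k r hr => (hcond k r hr).1, fun k hk => ?_⟩
    obtain ⟨r, hr⟩ := Multiset.exists_mem_of_ne_zero hk
    exact (hcond k r hr).2
  refine prod_eq_zero (mem_univ k) (Multiset.prod_eq_zero (Multiset.mem_map.2 ⟨r, hr, ?_⟩))
  rw [← addOrderOf_natCast_mul_eq_hOrd hed] at hdvd
  by_cases hhr : addOrderOf ((j * d : ℕ) : ZMod e) ∣ r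
  · obtain ⟨t, rfl⟩ := hhr
    exact cycleTrace_mul_eq_zero hjd xv hψ (Nat.pos_of_mul_pos_left (hα.1 k _ hr))
      fun hhk => hdvd ⟨dvd_mul_right _ t, hhk⟩
  · exact cycleTrace_eq_zero_of_not_dvd ψ hjd xv hhr

lemma prod_component_eq_pBracket (hed : p * d = e) (u : ℂ)
    (hcond : ∀ k, α k ≠ 0 → hOrd p j ∣ k.val) :
    ∏ k, ((α k).map fun r => hOrd p j * pGenSys (u ^ hOrd p j) (Esys p d j) (mmX e m)
        (vvX e p d m xv j) (k.val / hOrd p j) (r / hOrd p j)).prod =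
      (hOrd p j : ℂ) ^ lenBracket e p d j α * pBracket e p d u m xv j α := by
  have hh := hOrd_pos (j := j) hed
  have hE := hOrd_mul_Esys (j := j) hed
  have hempty (k : ℕ) (hk : ¬ hOrd p j ∣ k) : α (k : ZMod e) = 0 := by
    contrapose! hk
    have hdvd := hcond _ hk
    rwa [ZMod.val_natCast, Nat.dvd_mod_iff (Dvd.intro _ hE)] at hdvd
  have hval (l : ℕ) (hl : l < Esys p d j) :
      ((hOrd p j * l : ℕ) : ZMod e).val / hOrd p j = l := by
    rw [ZMod.val_cast_of_lt (hE ▸ Nat.mul_lt_mul_of_pos_left hl hh), Nat.mul_div_cancel_left l hh]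
  rw [prod_zmod_eq_prod_range,
    prod_range_eq_prod_range_mul_of_not_dvd hh hE fun k hk => by rw [hempty k hk]; rfl,
    lenBracket, pBracket, pAlphaSys, ← prod_pow_eq_pow_sum, ← prod_mul_distrib]
  refine prod_congr rfl fun l hl => ?_
  rw [mem_range] at hl
  simp only [bracketF, if_pos hl, Multiset.prod_map_mul, Multiset.map_const',
    Multiset.prod_replicate, Multiset.card_map, Multiset.map_map, comp_def, hval l hl]

lemma prod_cycleTrace_eq_pBracket (hed : p * d = e) (hα : IsEPartition e n α)
    (hcond : Cond261 e p j α) :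
    ∏ k, ((α k).map (cycleTrace ψ hjd xv k)).prod =
      ψ (-(Delta e α * (j * d : ℕ))) *
        ((hOrd p j : ℂ) ^ lenBracket e p d j α * pBracket e p d (ψ 1) m xv j α) := by
  have hDelta : ψ (-(Delta e α * (j * d : ℕ))) = ∏ k, ψ (-(k * (j * d : ℕ))) ^ (α k).card := by
    simp only [← AddChar.map_nsmul_eq_pow, ← addChar_map_sum, Delta, Nat.cast_sum, sum_mul,
      ← sum_neg_distrib]
    refine congrArg ψ (sum_congr rfl fun k _ => ?_)
    simp only [nsmul_eq_mul, Nat.cast_mul, ZMod.natCast_zmod_val]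
    ring
  rw [hDelta, ← prod_component_eq_pBracket xv hed (ψ 1) hcond.2, ← prod_mul_distrib]
  refine prod_congr rfl fun k _ => ?_
  rw [← Multiset.prod_replicate, ← Multiset.map_const', ← Multiset.prod_map_mul]
  refine congrArg Multiset.prod (Multiset.map_congr rfl fun r hr => ?_)
  exact cycleTrace_eq_pGenSys_vvX xv hjd hed (hα.1 k r hr) (hcond.1 k r hr)
    (hcond.2 k fun h => by simp [h] at hr)

end Bracket

theorem statement2_general (e p d n : ℕ) [NeZero e] [NeZero n] (hp : p ∣ e) (hd : d = e / p)
    (ζ : ℂ) (hζ : IsPrimitiveRoot ζ e)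
    (m : ZMod e → ℕ) (hm : ∀ k, m (k + (d : ZMod e)) = m k)
    (xv : BIdx e m → ℂ)
    (α : ZMod e → Multiset ℕ) (hα : IsEPartition e n α) (b : ZMod e) (j : ℕ) (w : Wt e n)
    (hconj : IsConjW e p n hp (wrep e n α b) w) :
    Matrix.trace (Dmat e n m xv * (tauMat e n d m hm) ^ j * rhoMat e n ζ m w) =
      if Cond261 e p j α then
        (hOrd p j : ℂ) ^ (lenBracket e p d j α) *
          zmpow e ζ (-(((Delta e α : ZMod e) + b) * ((j * d : ℕ) : ZMod e))) *
          pBracket e p d ζ m xv j α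
      else 0 := by
  have hed : p * d = e := by rw [hd, Nat.mul_div_cancel' hp]
  have hjd (k : ZMod e) : m (k + ((j * d : ℕ) : ZMod e)) = m k := by
    simpa using (show Periodic m (d : ZMod e) from hm).nat_mul j k
  obtain ⟨u, hu, rfl⟩ := hconj
  set ψ := AddChar.zmodChar e hζ.pow_eq_one
  have hψ : ψ.IsPrimitive := AddChar.zmodChar_primitive_of_primitive_root e hζ
  have hψ_one : ψ 1 = ζ := by simpa using AddChar.zmodChar_apply' hζ.pow_eq_one 1
  rw [trace_eq_twistedTrace hζ hm hjd xv, twistedTrace_conj,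
    sum_left_mul_eq_zero_of_mem_Wgrp hed hu, neg_zero, AddChar.map_zero_eq_one, one_mul,
    twistedTrace_wrep ψ hjd xv hα]
  split_ifs with hcond
  · rw [prod_cycleTrace_eq_pBracket xv hjd hed hα hcond, hψ_one, ← mul_assoc,
      ← AddChar.map_add_eq_mul, add_mul, neg_add_rev, show zmpow e ζ = ψ from rfl]
    ring
  · rw [prod_cycleTrace_eq_zero_of_not_cond261 xv hjd hψ hed hα hcond, mul_zero]

end GreenII

namespace GreenII

/-- Proposition 2.7.  Assume `w ∈ C_α` in `W̃` and that `w`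
is conjugate under `W` to `w_α(b)`.  Then `Tr(Dτ^j w, V^{⊗n}) = 0` unless `α`
satisfies (2.6.1), in which case
`Tr(Dτ^j w, V^{⊗n}) = h^{l(α[j])} ζ^{-(Δ(α)+b)jd} p_{α[j]}(𝒳_j)`. -/
theorem statement2 (e p d n : ℕ) [NeZero e] [NeZero n] (hp : p ∣ e) (hd : d = e / p)
    (ζ : ℂ) (hζ : IsPrimitiveRoot ζ e)
    (m : ZMod e → ℕ) (hmn : ∀ k, n ≤ m k) (hm : ∀ k, m (k + (d : ZMod e)) = m k)
    (xv : BIdx e m → ℂ)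
    (α : ZMod e → Multiset ℕ) (hα : IsEPartition e n α) (b : ZMod e)
    (j : ℕ) (hj : j < p)
    (w : Wt e n)
    (hclass : classOf e n w = α)
    (hconj : IsConjW e p n hp (wrep e n α b) w) :
    Matrix.trace (Dmat e n m xv * (tauMat e n d m hm) ^ j * rhoMat e n ζ m w) =
      if Cond261 e p j α then
        (hOrd p j : ℂ) ^ (lenBracket e p d j α) *
          zmpow e ζ (-(((Delta e α : ZMod e) + b) * ((j * d : ℕ) : ZMod e))) *
          pBracket e p d ζ m xv j α
      else 0 :=
  statement2_general e p d n hp hd ζ hζ m hm xv α hα b j w hconj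

end GreenII
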